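/- Let k ≥ 1 be an integer, ε ∈ (0,1) a constant, and C = k·ε^{−2}. Suppose Builder follows any deterministic online strategy with the property that, for every i ≤ ⌊Cn⌋, if both endpoints of e_i have degree less than k in B_{i−1}, then Builder purchases e_i. Then, with high probability, B_{⌊Cn⌋} has at most εn vertices of degree at most k−1. -/

import Mathlib

open Finset Filter

namespace RGP

/-- Number of edges of the complete graph on `n` vertices. -/
def numEdges (n : ℕ) : ℕ := n * (n - 1) / 2

/-- An edge of the complete graph on `Fin n` (an unordered pair of distinct vertices). -/
abbrev EdgeType (n : ℕ) := {e : Sym2 (Fin n) // ¬ e.IsDiag}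

/-- A uniformly random permutation of the edges of `K_n` is modelled by a bijection
`σ` between positions `Fin (numEdges n)` and edges; `σ i` is the edge `e_{i+1}`. -/
abbrev Ord (n : ℕ) := Fin (numEdges n) ≃ EdgeType n

/-- Degree of a vertex `v` in a set `S` of edges. -/
def deg {n : ℕ} (S : Finset (Sym2 (Fin n))) (v : Fin n) : ℕ :=
  (S.filter (fun e => v ∈ e)).card

/-- The edge set `{e_1, …, e_m}` of `G_{n,m}` in the random graph process `σ`. -/
def procEdges {n : ℕ} (σ : Ord n) (m : ℕ) : Finset (Sym2 (Fin n)) :=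
  (Finset.univ.filter (fun i : Fin (numEdges n) => (i : ℕ) < m)).image (fun i => (σ i).1)

/-- The hitting time `τ_k` for minimum degree at least `k`. -/
noncomputable def tau {n : ℕ} (k : ℕ) (σ : Ord n) : ℕ :=
  sInf {m | ∀ v : Fin n, k ≤ deg (procEdges σ m) v}

open scoped Classical in
/-- The probability of an event under the uniformly random edge ordering. -/
noncomputable def Pr {n : ℕ} (p : Ord n → Prop) : ℝ :=
  ((Finset.univ : Finset (Ord n)).filter p).card / (Fintype.card (Ord n) : ℝ)

/-- A deterministic online strategy: given the sequence of edges revealed so far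
(the last entry being the edge just revealed), decide whether to purchase it. -/
abbrev Strategy (n : ℕ) := List (Sym2 (Fin n)) → Bool

/-- The list of the first `i` revealed edges `e_1, …, e_i`. -/
def prefixList {n : ℕ} (σ : Ord n) (i : ℕ) : List (Sym2 (Fin n)) :=
  (List.range i).filterMap (fun j => if h : j < numEdges n then some (σ ⟨j, h⟩).1 else none)

/-- `buy st σ i` is the edge set of Builder's graph `B_i`: the edges purchased by the
strategy `st` among `e_1, …, e_i`. -/
def buy {n : ℕ} (st : Strategy n) (σ : Ord n) : ℕ → Finset (Sym2 (Fin n))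
  | 0 => ∅
  | i + 1 =>
    if h : i < numEdges n then
      if st (prefixList σ (i + 1)) then insert (σ ⟨i, h⟩).1 (buy st σ i)
      else buy st σ i
    else buy st σ i

end RGP

/-!
Let `m = ⌊k ε⁻² n⌋` and let `U` be the set of vertices of degree less than `k` in `B_m`. Degrees
only grow, so every edge among `e_1, …, e_m` inside `U` had both endpoints below degree `k` when it
appeared and was purchased; counting degrees, `U` spans at most `(k - 1) n / 2` edges of `G_{n,m}`.
But if `|U| > ε n`, then `U` contains about a fraction `ε²` of all edges and is expected to span
about `k n` of the first `m`.

The lower tail of the number `X` of edges spanned by a fixed `U` is controlled through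
`𝔼 s ^ X ≤ exp (-(1 - s) 𝔼 X)`. For independent edges this is immediate, and for a random
permutation it follows because `𝔼 ∏ f (σ i) ≤ ∏ 𝔼 f` for nonnegative `f`: sampling without
replacement only lowers the expected product. With `s = 1/4` Markov's inequality gives a probability
of order `2 ^ ((k - 1) n) exp (-(3/4) k n)`; after the union bound over the `2 ^ n` sets `U` this is
`(2 exp (-3/4)) ^ (k n)`, which tends to `0` for every `k ≥ 1` because `log 2 < 3/4`.
-/

namespace RGP

section ExpectPerm

open scoped BigOperators

variable {α E 𝕜 : Type*} [Fintype α] [DecidableEq α] [Fintype E] [DecidableEq E]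

lemma expect_equiv_trans [AddCommMonoid 𝕜] [Module ℚ≥0 𝕜] (π : Equiv.Perm α)
    (g : (α ≃ E) → 𝕜) : 𝔼 σ : α ≃ E, g (π.trans σ) = 𝔼 σ : α ≃ E, g σ :=
  Fintype.expect_equiv (Equiv.equivCongr π.symm (Equiv.refl E)) _ _ fun _ => rfl

lemma expect_prod_mul_apply_eq [CommSemiring 𝕜] [Module ℚ≥0 𝕜] (f g : E → 𝕜) {P : Finset α}
    {i j : α} (hi : i ∉ P) (hj : j ∉ P) :
    𝔼 σ : α ≃ E, (∏ x ∈ P, f (σ x)) * g (σ i) = 𝔼 σ : α ≃ E, (∏ x ∈ P, f (σ x)) * g (σ j) := by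
  rw [← expect_equiv_trans (Equiv.swap i j)]
  refine expect_congr rfl fun σ _ => ?_
  rw [Equiv.trans_apply, Equiv.swap_apply_left]
  congr 1
  refine prod_congr rfl fun x hx => ?_
  rw [Equiv.trans_apply, Equiv.swap_apply_of_ne_of_ne] <;> rintro rfl <;> contradiction

variable [Field 𝕜] [LinearOrder 𝕜] [IsStrictOrderedRing 𝕜] {f : E → 𝕜}

lemma expect_prod_mul_apply_le (hf : ∀ e, 0 ≤ f e) {P : Finset α} {i : α} (hi : i ∉ P) (j : α) :
    𝔼 σ : α ≃ E, (∏ x ∈ P, f (σ x)) * f (σ i) ≤ 𝔼 σ : α ≃ E, (∏ x ∈ P, f (σ x)) * f (σ j) := by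
  by_cases hj : j ∈ P
  swap
  · exact (expect_prod_mul_apply_eq f f hi hj).le
  set R : (α ≃ E) → 𝕜 := fun σ => ∏ x ∈ P.erase j, f (σ x)
  have hprod (σ : α ≃ E) : ∏ x ∈ P, f (σ x) = R σ * f (σ j) := (prod_erase_mul P _ hj).symm
  have hswap : 𝔼 σ : α ≃ E, R σ * f (σ i) ^ 2 = 𝔼 σ : α ≃ E, R σ * f (σ j) ^ 2 :=
    expect_prod_mul_apply_eq f (fun e => f e ^ 2) (fun h => hi (mem_of_mem_erase h))
      (notMem_erase j P)
  -- AM-GM: `f (σ i) * f (σ j)` is at most the mean of the two squares, which `hswap` equates.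
  calc 𝔼 σ : α ≃ E, (∏ x ∈ P, f (σ x)) * f (σ i)
      ≤ 𝔼 σ : α ≃ E, (R σ * f (σ i) ^ 2 + R σ * f (σ j) ^ 2) / 2 := by
        refine expect_le_expect fun σ _ => ?_
        have hR0 : 0 ≤ R σ := prod_nonneg fun x _ => hf (σ x)
        rw [hprod]
        linarith [mul_nonneg hR0 (sq_nonneg (f (σ i) - f (σ j)))]
    _ = 𝔼 σ : α ≃ E, R σ * f (σ j) ^ 2 := by
        rw [← expect_div, expect_add_distrib, hswap, add_self_div_two]
    _ = 𝔼 σ : α ≃ E, (∏ x ∈ P, f (σ x)) * f (σ j) :=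
        expect_congr rfl fun σ _ => by rw [hprod, pow_two, mul_assoc]

lemma expect_prod_insert_le (hf : ∀ e, 0 ≤ f e) {P : Finset α} {i : α} (hi : i ∉ P) :
    𝔼 σ : α ≃ E, ∏ x ∈ insert i P, f (σ x) ≤ (𝔼 e, f e) * 𝔼 σ : α ≃ E, ∏ x ∈ P, f (σ x) := by
  simp_rw [prod_insert hi, mul_comm (f _)]
  calc 𝔼 σ : α ≃ E, (∏ x ∈ P, f (σ x)) * f (σ i)
      ≤ 𝔼 j, 𝔼 σ : α ≃ E, (∏ x ∈ P, f (σ x)) * f (σ j) :=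
        le_expect ⟨i, mem_univ i⟩ fun j _ => expect_prod_mul_apply_le hf hi j
    _ = 𝔼 σ : α ≃ E, (∏ x ∈ P, f (σ x)) * 𝔼 j, f (σ j) := by
        rw [expect_comm]
        simp_rw [mul_expect]
    _ = (𝔼 e, f e) * 𝔼 σ : α ≃ E, ∏ x ∈ P, f (σ x) := by
        rw [mul_expect]
        refine expect_congr rfl fun σ _ => ?_
        rw [Fintype.expect_equiv σ (fun j => f (σ j)) f fun _ => rfl, mul_comm]

theorem expect_prod_le_expect_pow_card (hf : ∀ e, 0 ≤ f e) (P : Finset α) :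
    𝔼 σ : α ≃ E, ∏ x ∈ P, f (σ x) ≤ (𝔼 e, f e) ^ #P := by
  induction P using Finset.induction_on with
  | empty =>
    simp only [prod_empty, card_empty, pow_zero]
    rcases isEmpty_or_nonempty (α ≃ E)
    · simp
    · rw [Fintype.expect_one]
  | insert i P hi ih =>
    calc 𝔼 σ : α ≃ E, ∏ x ∈ insert i P, f (σ x)
        ≤ (𝔼 e, f e) * 𝔼 σ : α ≃ E, ∏ x ∈ P, f (σ x) := expect_prod_insert_le hf hi
      _ ≤ (𝔼 e, f e) * (𝔼 e, f e) ^ #P :=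
          mul_le_mul_of_nonneg_left ih (expect_nonneg fun e _ => hf e)
      _ = (𝔼 e, f e) ^ #(insert i P) := by rw [card_insert_of_notMem hi, pow_succ']

lemma expect_ite_mem_le_exp (A : Finset E) (s : ℝ) :
    𝔼 e, (if e ∈ A then s else 1) ≤ Real.exp (-((1 - s) * A.dens)) := by
  rcases isEmpty_or_nonempty E
  · simp [Real.exp_nonneg]
  have hE : (Fintype.card E : ℝ) ≠ 0 := by exact_mod_cast Fintype.card_ne_zero
  have hsum : ∑ e, (if e ∈ A then s else 1) = Fintype.card E - (1 - s) * #A := by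
    have h (e : E) : (if e ∈ A then s else 1) = 1 - if e ∈ A then 1 - s else 0 := by
      split_ifs <;> ring
    simp only [h, sum_sub_distrib, sum_ite_mem, univ_inter, sum_const, card_univ, nsmul_eq_mul]
    ring
  calc 𝔼 e, (if e ∈ A then s else 1)
      = -((1 - s) * A.dens) + 1 := by
        rw [Fintype.expect_eq_sum_div_card, hsum, nnratCast_dens]
        field_simp
        ring
    _ ≤ Real.exp (-((1 - s) * A.dens)) := Real.add_one_le_exp _

theorem expect_pow_card_filter_mem_le (P : Finset α) (A : Finset E) {s : ℝ} (hs : 0 ≤ s) :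
    𝔼 σ : α ≃ E, s ^ #{i ∈ P | σ i ∈ A} ≤ Real.exp (-((1 - s) * (A.dens * #P))) := by
  have hf (e : E) : 0 ≤ if e ∈ A then s else 1 := by split_ifs <;> positivity
  calc 𝔼 σ : α ≃ E, s ^ #{i ∈ P | σ i ∈ A}
      = 𝔼 σ : α ≃ E, ∏ i ∈ P, if σ i ∈ A then s else 1 := by
        simp_rw [prod_ite, prod_const_one, mul_one, prod_const]
    _ ≤ (𝔼 e, if e ∈ A then s else 1) ^ #P := expect_prod_le_expect_pow_card hf P
    _ ≤ Real.exp (-((1 - s) * A.dens)) ^ #P :=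
        pow_le_pow_left₀ (expect_nonneg fun e _ => hf e) (expect_ite_mem_le_exp A s) _
    _ = Real.exp (-((1 - s) * (A.dens * #P))) := by
        rw [← Real.exp_nat_mul]
        ring_nf

end ExpectPerm

section Probability

open scoped BigOperators

variable {n : ℕ} {p q : Ord n → Prop}

lemma card_edgeType (n : ℕ) : Fintype.card (EdgeType n) = n.choose 2 := by
  rw [Sym2.card_subtype_not_diag, Fintype.card_fin]

lemma numEdges_eq_choose (n : ℕ) : numEdges n = n.choose 2 := (Nat.choose_two_right n).symm

instance : Nonempty (Ord n) :=
  ⟨Fintype.equivOfCardEq (by rw [Fintype.card_fin, card_edgeType, numEdges_eq_choose])⟩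

open scoped Classical in
lemma Pr_eq_expect (p : Ord n → Prop) : Pr p = 𝔼 σ, if p σ then (1 : ℝ) else 0 := by
  rw [Fintype.expect_eq_sum_div_card, sum_boole, Pr]

lemma Pr_le_expect {g : Ord n → ℝ} (hg : ∀ σ, 0 ≤ g σ) (hp : ∀ σ, p σ → 1 ≤ g σ) :
    Pr p ≤ 𝔼 σ, g σ := by
  rw [Pr_eq_expect]
  refine expect_le_expect fun σ _ => ?_
  split_ifs with h
  exacts [hp σ h, hg σ]

lemma Pr_nonneg (p : Ord n → Prop) : 0 ≤ Pr p := by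
  rw [Pr]
  positivity

lemma Pr_le_one (p : Ord n → Prop) : Pr p ≤ 1 := by
  simpa using Pr_le_expect (p := p) (g := 1) (fun _ => zero_le_one) fun _ _ => le_rfl

lemma Pr_mono (h : ∀ σ, p σ → q σ) : Pr p ≤ Pr q := by
  classical
  rw [Pr_eq_expect q]
  refine Pr_le_expect (fun σ => by positivity) fun σ hσ => ?_
  rw [if_pos (h σ hσ)]

lemma Pr_not (p : Ord n → Prop) : Pr (fun σ => ¬ p σ) = 1 - Pr p := by
  classical
  rw [Pr_eq_expect, Pr_eq_expect, ← Fintype.expect_one (ι := Ord n), ← expect_sub_distrib]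
  refine expect_congr rfl fun σ _ => ?_
  by_cases h : p σ <;> simp [h]

lemma Pr_exists_le {ι : Type*} [Fintype ι] (r : ι → Ord n → Prop) :
    Pr (fun σ => ∃ a, r a σ) ≤ ∑ a, Pr (r a) := by
  classical
  simp_rw [Pr_eq_expect (r _), ← expect_sum_comm]
  refine Pr_le_expect (fun σ => by positivity) fun σ ⟨a, ha⟩ => ?_
  exact (if_pos ha).ge.trans
    (single_le_sum (f := fun a => if r a σ then (1 : ℝ) else 0) (fun _ _ => by positivity)
      (mem_univ a))

end Probability

section SpannedEdges

variable {n : ℕ}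

/-- The edges of the complete graph with both endpoints in `U`. -/
def edgesWithin (U : Finset (Fin n)) : Finset (EdgeType n) := U.sym2.subtype _

lemma card_edgesWithin (U : Finset (Fin n)) : #(edgesWithin U) = (#U).choose 2 := by
  rw [edgesWithin, card_subtype, sym2_eq_image, Sym2.filter_image_mk_not_isDiag,
    Sym2.card_image_offDiag]

lemma dens_edgesWithin (U : Finset (Fin n)) :
    ((edgesWithin U).dens : ℝ) = (#U).choose 2 / n.choose 2 := by
  rw [nnratCast_dens, card_edgesWithin, card_edgeType]

lemma le_dens_edgesWithin {ε : ℝ} (hε : 0 ≤ ε) (hn : 2 ≤ n) {U : Finset (Fin n)}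
    (hU : ε * n < #U) : ε ^ 2 - ε / n ≤ (edgesWithin U).dens := by
  have hn' : (2 : ℝ) ≤ n := by exact_mod_cast hn
  have hεn : 0 ≤ ε * n := by positivity
  have hU1 : (1 : ℝ) ≤ #U := by exact_mod_cast hεn.trans_lt hU
  calc ε ^ 2 - ε / n
      = ε * n * (ε * n - 1) / (n * n) := by field_simp
    _ ≤ #U * (#U - 1) / (n * n) := by
        refine div_le_div_of_nonneg_right ?_ (by positivity)
        linarith [mul_nonneg (sub_nonneg.2 hU.le)
          (add_nonneg hεn (sub_nonneg.2 hU1))]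
    _ ≤ #U * (#U - 1) / (n * (n - 1)) := by
        refine div_le_div_of_nonneg_left ?_ ?_ ?_ <;> nlinarith
    _ = (edgesWithin U).dens := by
        rw [dens_edgesWithin, Nat.cast_choose_two, Nat.cast_choose_two, div_div_div_cancel_right₀]
        norm_num

lemma sub_le_dens_edgesWithin_mul_floor {k ε : ℝ} (hk : 0 ≤ k) (hε : 0 < ε) (hn : 2 ≤ n)
    {U : Finset (Fin n)} (hU : ε * n < #U) :
    k * n - (k / ε + 1) ≤ (edgesWithin U).dens * ⌊k * ε⁻¹ ^ 2 * n⌋₊ := by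
  have hd1 : ((edgesWithin U).dens : ℝ) ≤ 1 := by exact_mod_cast dens_le_one
  set d : ℝ := ((edgesWithin U).dens : ℝ)
  have hn0 : (n : ℝ) ≠ 0 := by positivity
  calc k * n - (k / ε + 1)
      = (ε ^ 2 - ε / n) * (k * ε⁻¹ ^ 2 * n) - 1 := by field_simp; ring
    _ ≤ d * (k * ε⁻¹ ^ 2 * n) - d := by
        gcongr
        exact le_dens_edgesWithin hε.le hn hU
    _ = d * (k * ε⁻¹ ^ 2 * n - 1) := by ring
    _ ≤ d * ⌊k * ε⁻¹ ^ 2 * n⌋₊ := by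
        gcongr
        exact (Nat.sub_one_lt_floor _).le

lemma card_procEdges_inter_sym2 (σ : Ord n) (m : ℕ) (U : Finset (Fin n)) :
    #(procEdges σ m ∩ U.sym2) =
      #{i ∈ ({i | (i : ℕ) < m} : Finset (Fin (numEdges n))) | σ i ∈ edgesWithin U} := by
  have h : procEdges σ m ∩ U.sym2 =
      ({i ∈ ({i | (i : ℕ) < m} : Finset (Fin (numEdges n))) | σ i ∈ edgesWithin U}).image
        fun i => (σ i).1 := by
    rw [procEdges, ← filter_mem_eq_inter, filter_image]
    simp only [edgesWithin, mem_subtype]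
  exact h ▸ card_image_of_injective _ (Subtype.val_injective.comp σ.injective)

theorem Pr_two_mul_card_inter_sym2_le {m : ℕ} (hm : m ≤ numEdges n) (U : Finset (Fin n))
    (L : ℕ) :
    Pr (fun σ : Ord n => 2 * #(procEdges σ m ∩ U.sym2) ≤ L) ≤
      2 ^ L * Real.exp (-(3 / 4 * ((edgesWithin U).dens * m))) := by
  set P : Finset (Fin (numEdges n)) := {i | (i : ℕ) < m} with hP
  have hPm : #P = m := by rw [hP, Fin.card_filter_val_lt, min_eq_right hm]
  refine (Pr_le_expect (g := fun σ => 2 ^ L * (1 / 4) ^ #{i ∈ P | σ i ∈ edgesWithin U})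
    (fun σ => by positivity) fun σ hσ => ?_).trans ?_
  · rw [card_procEdges_inter_sym2, ← hP] at hσ
    rw [one_div, inv_pow, ← div_eq_mul_inv, one_le_div (by positivity)]
    calc (4 : ℝ) ^ #{i ∈ P | σ i ∈ edgesWithin U}
        = 2 ^ (2 * #{i ∈ P | σ i ∈ edgesWithin U}) := by rw [pow_mul]; norm_num
      _ ≤ 2 ^ L := pow_le_pow_right₀ one_le_two hσ
  · rw [← mul_expect, ← hPm]
    gcongr
    have h34 : (3 / 4 : ℝ) = 1 - 1 / 4 := by norm_num
    rw [h34]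
    exact expect_pow_card_filter_mem_le P (edgesWithin U) (by norm_num)

/-- Some set of more than `ε n` vertices spans at most `(k - 1) n / 2` of the first `m` edges
of the process. -/
def HasSparseLargeSet (k : ℕ) (ε : ℝ) (m : ℕ) (σ : Ord n) : Prop :=
  ∃ U : Finset (Fin n), ε * n < #U ∧ 2 * #(procEdges σ m ∩ U.sym2) ≤ (k - 1) * n

theorem Pr_hasSparseLargeSet_le {k : ℕ} (hk : 1 ≤ k) {ε : ℝ} (hε : 0 < ε) (hn : 2 ≤ n)
    (hm : ⌊(k : ℝ) * ε⁻¹ ^ 2 * n⌋₊ ≤ numEdges n) :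
    Pr (HasSparseLargeSet (n := n) k ε ⌊(k : ℝ) * ε⁻¹ ^ 2 * n⌋₊) ≤
      Real.exp (3 / 4 * (k / ε + 1)) * ((2 * Real.exp (-(3 / 4))) ^ k) ^ n := by
  set m := ⌊(k : ℝ) * ε⁻¹ ^ 2 * n⌋₊
  set b : ℝ := 2 ^ ((k - 1) * n) * Real.exp (-(3 / 4 * (k * n - (k / ε + 1)))) with hb
  have hU (U : Finset (Fin n)) :
      Pr (fun σ : Ord n => ε * n < #U ∧ 2 * #(procEdges σ m ∩ U.sym2) ≤ (k - 1) * n) ≤ b := by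
    by_cases hlarge : ε * n < #U
    · refine (Pr_mono fun σ h => h.2).trans ((Pr_two_mul_card_inter_sym2_le hm U _).trans ?_)
      rw [hb]
      gcongr
      exact sub_le_dens_edgesWithin_mul_floor k.cast_nonneg hε hn hlarge
    · simp only [hlarge, false_and]
      exact (by simp [Pr] : Pr (fun _ : Ord n => False) = 0).trans_le (by positivity)
  calc Pr (HasSparseLargeSet (n := n) k ε m)
      ≤ ∑ _U : Finset (Fin n), b := (Pr_exists_le _).trans (sum_le_sum fun U _ => hU U)
    _ = 2 ^ n * 2 ^ ((k - 1) * n) * Real.exp (-(3 / 4 * (k * n - (k / ε + 1)))) := by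
        simp [hb, mul_assoc]
    _ = 2 ^ (k * n) * Real.exp (3 / 4 * (k / ε + 1) + (k * n : ℕ) * (-(3 / 4))) := by
        have hexp : n + (k - 1) * n = k * n := by
          rw [add_comm, ← Nat.succ_mul, Nat.succ_eq_add_one, Nat.sub_add_cancel hk]
        rw [← pow_add, hexp]
        congr 2
        push_cast
        ring
    _ = Real.exp (3 / 4 * (k / ε + 1)) * ((2 * Real.exp (-(3 / 4))) ^ k) ^ n := by
        rw [Real.exp_add, Real.exp_nat_mul, ← pow_mul, mul_pow]
        ring

lemma two_mul_exp_neg_three_quarters_lt_one : 2 * Real.exp (-(3 / 4)) < 1 := by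
  rw [Real.exp_neg, ← div_eq_mul_inv, div_lt_one (Real.exp_pos _),
    ← Real.log_lt_iff_lt_exp two_pos]
  linarith [Real.log_two_lt_d9]

lemma eventually_floor_mul_le_numEdges (K : ℝ) :
    ∀ᶠ n : ℕ in atTop, ⌊K * n⌋₊ ≤ numEdges n := by
  filter_upwards [tendsto_natCast_atTop_atTop.eventually_ge_atTop (2 * K + 1)] with n hn
  refine Nat.floor_le_of_le ?_
  rw [numEdges_eq_choose, Nat.cast_choose_two]
  nlinarith [(n.cast_nonneg : (0 : ℝ) ≤ n)]

theorem tendsto_Pr_hasSparseLargeSet_zero {k : ℕ} (hk : 1 ≤ k) {ε : ℝ} (hε : 0 < ε) :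
    Tendsto (fun n : ℕ => Pr (HasSparseLargeSet (n := n) k ε ⌊(k : ℝ) * ε⁻¹ ^ 2 * n⌋₊))
      atTop (nhds 0) := by
  have hr : (2 * Real.exp (-(3 / 4))) ^ k < 1 :=
    pow_lt_one₀ (by positivity) two_mul_exp_neg_three_quarters_lt_one (by omega)
  have hlim := (tendsto_pow_atTop_nhds_zero_of_lt_one (by positivity) hr).const_mul
    (Real.exp (3 / 4 * (k / ε + 1)))
  rw [mul_zero] at hlim
  refine squeeze_zero' (.of_forall fun n => Pr_nonneg _) ?_ hlim
  filter_upwards [eventually_ge_atTop 2, eventually_floor_mul_le_numEdges (k * ε⁻¹ ^ 2)]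
    with n hn hm using Pr_hasSparseLargeSet_le hk hε hn hm

end SpannedEdges

section GreedyPurchases

variable {n k m : ℕ} {st : Strategy n} {σ : Ord n} {U : Finset (Fin n)}

/-- On the edge ordering `σ`, the strategy `st` purchases each of the first `m` edges both of whose
endpoints have degree less than `k` at that moment. This concerns a single ordering, so that `st`
may be chosen knowing `σ`. -/
def IsGreedyOn (k m : ℕ) (st : Strategy n) (σ : Ord n) : Prop :=
  ∀ j : ℕ, ∀ hj : j < numEdges n, j < m →
    (∀ v ∈ (σ ⟨j, hj⟩ : Sym2 (Fin n)), deg (buy st σ j) v < k) →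
      (σ ⟨j, hj⟩ : Sym2 (Fin n)) ∈ buy st σ (j + 1)

lemma buy_mono (st : Strategy n) (σ : Ord n) : Monotone (buy st σ) := by
  refine monotone_nat_of_le_succ fun i => ?_
  rw [buy]
  split_ifs
  exacts [subset_insert _ _, le_rfl, le_rfl]

lemma not_isDiag_of_mem_buy {i : ℕ} {e : Sym2 (Fin n)} (he : e ∈ buy st σ i) : ¬ e.IsDiag := by
  induction i with
  | zero => simp [buy] at he
  | succ i ih =>
    rw [buy] at he
    split_ifs at he with hi
    · rcases mem_insert.1 he with rfl | he
      exacts [(σ ⟨i, hi⟩).2, ih he]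
    all_goals exact ih he

lemma deg_mono {S T : Finset (Sym2 (Fin n))} (h : S ⊆ T) (v : Fin n) : deg S v ≤ deg T v :=
  card_le_card (filter_subset_filter _ h)

lemma two_mul_card_inter_sym2_le_sum_deg {S : Finset (Sym2 (Fin n))}
    (hS : ∀ e ∈ S, ¬ e.IsDiag) (U : Finset (Fin n)) :
    2 * #(S ∩ U.sym2) ≤ ∑ v ∈ U, deg S v := by
  have hpair (e : Sym2 (Fin n)) (he : e ∈ S ∩ U.sym2) : 2 ≤ #{v ∈ U | v ∈ e} := by
    rw [mem_inter, mem_sym2_iff] at he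
    rw [← Sym2.card_toFinset_of_not_isDiag e (hS e he.1)]
    refine card_le_card fun v hv => ?_
    rw [Sym2.mem_toFinset] at hv
    exact mem_filter.2 ⟨he.2 v hv, hv⟩
  calc 2 * #(S ∩ U.sym2)
      ≤ ∑ e ∈ S ∩ U.sym2, #{v ∈ U | v ∈ e} := by
        rw [mul_comm]
        exact card_nsmul_le_sum _ _ _ hpair
    _ ≤ ∑ e ∈ S, #{v ∈ U | v ∈ e} := sum_le_sum_of_subset inter_subset_left
    _ = ∑ v ∈ U, deg S v := (sum_card_bipartiteAbove_eq_sum_card_bipartiteBelow _).symm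

lemma IsGreedyOn.procEdges_inter_sym2_subset_buy (h : IsGreedyOn k m st σ)
    (hU : ∀ v ∈ U, deg (buy st σ m) v < k) : procEdges σ m ∩ U.sym2 ⊆ buy st σ m := by
  intro e he
  obtain ⟨hproc, heU⟩ := mem_inter.1 he
  obtain ⟨i, hi, rfl⟩ := mem_image.1 hproc
  have him : (i : ℕ) < m := (mem_filter.1 hi).2
  refine buy_mono st σ him (h i i.2 him fun v hv => ?_)
  exact (deg_mono (buy_mono st σ him.le) v).trans_lt (hU v (mem_sym2_iff.1 heU v hv))

theorem IsGreedyOn.two_mul_card_inter_sym2_le (h : IsGreedyOn k m st σ)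
    (hU : ∀ v ∈ U, deg (buy st σ m) v < k) :
    2 * #(procEdges σ m ∩ U.sym2) ≤ (k - 1) * n :=
  calc 2 * #(procEdges σ m ∩ U.sym2)
      ≤ 2 * #(buy st σ m ∩ U.sym2) := by
        refine Nat.mul_le_mul_left 2 (card_le_card ?_)
        exact subset_inter (h.procEdges_inter_sym2_subset_buy hU) inter_subset_right
    _ ≤ ∑ v ∈ U, deg (buy st σ m) v :=
        two_mul_card_inter_sym2_le_sum_deg (fun _ => not_isDiag_of_mem_buy) U
    _ ≤ #U * (k - 1) := sum_le_card_nsmul _ _ _ fun v hv => Nat.le_sub_one_of_lt (hU v hv)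
    _ ≤ (k - 1) * n := by
        rw [mul_comm]
        gcongr
        exact card_finset_fin_le U

lemma IsGreedyOn.hasSparseLargeSet (hk : 1 ≤ k) {ε : ℝ} (h : IsGreedyOn k m st σ)
    (hlow : ε * n < #{v | deg (buy st σ m) v ≤ k - 1}) : HasSparseLargeSet k ε m σ :=
  ⟨_, hlow, h.two_mul_card_inter_sym2_le fun v hv => by
    have := (mem_filter.1 hv).2
    omega⟩

end GreedyPurchases

theorem greedy_few_low_degree_general (k : ℕ) (hk : 1 ≤ k) (ε : ℝ) (hε : 0 < ε) :
    Tendsto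
      (fun n : ℕ => Pr (fun σ : Ord n => ∀ st : Strategy n,
        IsGreedyOn k ⌊(k : ℝ) * ε⁻¹ ^ 2 * (n : ℝ)⌋₊ st σ →
          (#{v | deg (buy st σ ⌊(k : ℝ) * ε⁻¹ ^ 2 * (n : ℝ)⌋₊) v ≤ k - 1} : ℝ) ≤ ε * n))
      atTop (nhds 1) := by
  have hlim := (tendsto_Pr_hasSparseLargeSet_zero hk hε).const_sub 1
  simp_rw [sub_zero, ← Pr_not] at hlim
  refine tendsto_of_tendsto_of_tendsto_of_le_of_le hlim tendsto_const_nhds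
    (fun n => Pr_mono fun σ hσ st hst => ?_) fun _ => Pr_le_one _
  by_contra! hlow
  exact hσ (hst.hasSparseLargeSet hk hlow)

/-- Let `k ≥ 1` be an integer, `ε ∈ (0,1)` a constant and `C = k·ε⁻²`.
If Builder follows any deterministic online strategy which purchases `e_i` whenever
`i ≤ ⌊Cn⌋` and both endpoints of `e_i` have degree less than `k` in `B_{i−1}`, then,
with high probability, `B_{⌊Cn⌋}` has at most `εn` vertices of degree at most `k−1`. -/
theorem greedy_few_low_degree (k : ℕ) (hk : 1 ≤ k) (ε : ℝ) (hε : 0 < ε) (hε1 : ε < 1)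
    (st : (n : ℕ) → Strategy n)
    (hst : ∀ n : ℕ, ∀ σ : Ord n, ∀ j : ℕ, ∀ hj : j < numEdges n,
      j < ⌊(k : ℝ) * ε⁻¹ ^ 2 * (n : ℝ)⌋₊ →
      (∀ v ∈ ((σ ⟨j, hj⟩ : EdgeType n) : Sym2 (Fin n)), deg (buy (st n) σ j) v < k) →
      ((σ ⟨j, hj⟩ : EdgeType n) : Sym2 (Fin n)) ∈ buy (st n) σ (j + 1)) :
    Filter.Tendsto
      (fun n : ℕ => Pr (fun σ : Ord n =>
        ((((Finset.univ : Finset (Fin n)).filter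
            (fun v => deg (buy (st n) σ ⌊(k : ℝ) * ε⁻¹ ^ 2 * (n : ℝ)⌋₊) v ≤ k - 1)).card : ℝ)
          ≤ ε * n)))
      Filter.atTop (nhds 1) :=
  tendsto_of_tendsto_of_tendsto_of_le_of_le (greedy_few_low_degree_general k hk ε hε)
    tendsto_const_nhds (fun n => Pr_mono fun σ h => h (st n) (hst n σ)) fun _ => Pr_le_one _

end RGP
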